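/- Let Σ = (PROP, NOM) be a finite hybrid signature and F ⊆ {@, ↓, ∃, NOM}. If (B_k)_{k∈ω} is an F-ω-bisimulation between Kripke structures M and N over Σ and ((⟨⟩, m), (⟨⟩, n)) ∈ B_0 (⟨⟩ the empty sequence), then (M, m) and (N, n) are F-elementarily equivalent, i.e., M, m ⊩ ψ iff N, n ⊩ ψ for every hybrid sentence ψ of the F-fragment. -/

import Mathlib

set_option autoImplicit false

/-! ## Hybrid logic: Kripke structures, hybrid formulas, satisfaction -/

/-- A Kripke structure over a hybrid signature `Σ = (P, Nom)`:
`P` the propositional variables, `Nom` the nominals. -/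
structure Kripke (P : Type) (Nom : Type) : Type 1 where
  W : Type
  R : W → W → Prop
  V : P → W → Prop
  nom : Nom → W

/-- Hybrid formulas over `Σ = (P, Nom)`; the world variables are the natural numbers.
`bind x φ` is `↓x φ`, `atv x φ` is `@_x φ`, `atn s φ` is `@_s φ`, `exq x φ` is `∃x φ`. -/
inductive HForm (P : Type) (Nom : Type) : Type
  | bot  : HForm P Nom
  | prop (p : P) : HForm P Nom
  | nom  (s : Nom) : HForm P Nom
  | wvar (x : ℕ) : HForm P Nom
  | neg  (φ : HForm P Nom) : HForm P Nom
  | or   (φ ψ : HForm P Nom) : HForm P Nom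
  | dia  (φ : HForm P Nom) : HForm P Nom
  | bind (x : ℕ) (φ : HForm P Nom) : HForm P Nom
  | atv  (x : ℕ) (φ : HForm P Nom) : HForm P Nom
  | atn  (s : Nom) (φ : HForm P Nom) : HForm P Nom
  | exq  (x : ℕ) (φ : HForm P Nom) : HForm P Nom

namespace HForm

/-- Conjunction, as an abbreviation `φ ∧ ψ := ¬(¬φ ∨ ¬ψ)`. -/
def and {P Nom : Type} (φ ψ : HForm P Nom) : HForm P Nom := .neg (.or (.neg φ) (.neg ψ))

/-- Free world variables of a hybrid formula. -/
def free {P Nom : Type} : HForm P Nom → Set ℕ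
  | .bot => ∅
  | .prop _ => ∅
  | .nom _ => ∅
  | .wvar x => {x}
  | .neg φ => φ.free
  | .or φ ψ => φ.free ∪ ψ.free
  | .dia φ => φ.free
  | .bind x φ => φ.free \ {x}
  | .atv x φ => insert x φ.free
  | .atn _ φ => φ.free
  | .exq x φ => φ.free \ {x}

/-- The degree of a hybrid formula. -/
def deg {P Nom : Type} : HForm P Nom → ℕ
  | .bot => 0
  | .prop _ => 0
  | .nom _ => 0
  | .wvar _ => 0
  | .neg φ => φ.deg
  | .or φ ψ => max φ.deg ψ.deg
  | .dia φ => φ.deg + 1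
  | .bind _ φ => φ.deg + 1
  | .atv _ φ => φ.deg
  | .atn _ φ => φ.deg
  | .exq _ φ => φ.deg + 1

end HForm

/-- The hybrid language features beyond basic modal logic: `@`, `↓`, `∃`, nominals. -/
inductive Feature : Type
  | at_ | bind | exq | nom
deriving DecidableEq

/-- Membership of a hybrid formula in the `F`-fragment: it uses only operators from `F`,
and nominals only if `Feature.nom ∈ F`. -/
def HForm.inFragment {P Nom : Type} (F : Set Feature) : HForm P Nom → Prop
  | .bot => True
  | .prop _ => True
  | .nom _ => Feature.nom ∈ F
  | .wvar _ => True
  | .neg φ => φ.inFragment F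
  | .or φ ψ => φ.inFragment F ∧ ψ.inFragment F
  | .dia φ => φ.inFragment F
  | .bind _ φ => Feature.bind ∈ F ∧ φ.inFragment F
  | .atv _ φ => Feature.at_ ∈ F ∧ φ.inFragment F
  | .atn _ φ => Feature.at_ ∈ F ∧ Feature.nom ∈ F ∧ φ.inFragment F
  | .exq _ φ => Feature.exq ∈ F ∧ φ.inFragment F

/-- Hybrid satisfaction `M, ν, m ⊩ φ`. -/
def HSat {P Nom : Type} (M : Kripke P Nom) : (ℕ → M.W) → M.W → HForm P Nom → Prop
  | _, _, .bot => False
  | _, m, .prop p => M.V p m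
  | _, m, .nom s => m = M.nom s
  | ν, m, .wvar x => m = ν x
  | ν, m, .neg φ => ¬ HSat M ν m φ
  | ν, m, .or φ ψ => HSat M ν m φ ∨ HSat M ν m ψ
  | ν, m, .dia φ => ∃ m', M.R m m' ∧ HSat M ν m' φ
  | ν, m, .bind x φ => HSat M (Function.update ν x m) m φ
  | ν, m, .atv x φ => HSat M ν (ν x) φ
  | ν, m, .atn s φ => HSat M ν (M.nom s) φ
  | ν, m, .exq x φ => ∃ m' : M.W, HSat M (Function.update ν x m') m φ

/-- Satisfaction of a hybrid sentence: `M, m ⊩ φ` (the assignment is irrelevant). -/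
def HSatS {P Nom : Type} (M : Kripke P Nom) (m : M.W) (φ : HForm P Nom) : Prop :=
  ∀ ν : ℕ → M.W, HSat M ν m φ

/-- `F`-elementary equivalence of pointed Kripke structures. -/
def FElemEquiv {P Nom : Type} (F : Set Feature) (M : Kripke P Nom) (m : M.W)
    (N : Kripke P Nom) (n : N.W) : Prop :=
  ∀ ψ : HForm P Nom, ψ.inFragment F → ψ.free = ∅ → (HSatS M m ψ ↔ HSatS N n ψ)

/-! ## First-order logic over the corresponding signature `Σ°` -/

/-- First-order variables: the world variables `Sum.inl n` together with the two
designated variables `x = Sum.inr false` and `y = Sum.inr true`. -/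
abbrev FVar : Type := ℕ ⊕ Bool

/-- First-order terms over `Σ°` with variables from `V`: variables and nominal constants. -/
inductive FOTerm (Nom V : Type) : Type
  | var (v : V)
  | nom (s : Nom)

/-- First-order formulas over `Σ°` (one binary relation `R`, a unary predicate for each
propositional variable, a constant for each nominal), with variables from `V`. -/
inductive FOForm (P Nom V : Type) : Type
  | bot
  | pred (p : P) (t : FOTerm Nom V)
  | rel (t u : FOTerm Nom V)
  | eq (t u : FOTerm Nom V)
  | neg (φ : FOForm P Nom V)
  | or (φ ψ : FOForm P Nom V)
  | ex (v : V) (φ : FOForm P Nom V)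

/-- First-order conjunction, `φ ∧ ψ := ¬(¬φ ∨ ¬ψ)`. -/
def FOForm.and {P Nom V : Type} (φ ψ : FOForm P Nom V) : FOForm P Nom V :=
  .neg (.or (.neg φ) (.neg ψ))

/-- Value of a term under an assignment, in a Kripke structure viewed as a `Σ°`-structure. -/
def FOTerm.val {P Nom V : Type} (M : Kripke P Nom) (g : V → M.W) : FOTerm Nom V → M.W
  | .var v => g v
  | .nom s => M.nom s

/-- First-order satisfaction in a Kripke structure viewed as a `Σ°`-structure. -/
def FOSat {P Nom V : Type} [DecidableEq V] (M : Kripke P Nom) (g : V → M.W) :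
    FOForm P Nom V → Prop
  | .bot => False
  | .pred p t => M.V p (t.val M g)
  | .rel t u => M.R (t.val M g) (u.val M g)
  | .eq t u => t.val M g = u.val M g
  | .neg φ => ¬ FOSat M g φ
  | .or φ ψ => FOSat M g φ ∨ FOSat M g ψ
  | .ex v φ => ∃ w : M.W, FOSat M (Function.update g v w) φ

/-- Variables of a first-order term. -/
def FOTerm.fvars {Nom V : Type} : FOTerm Nom V → Set V
  | .var v => {v}
  | .nom _ => ∅

/-- Free variables of a first-order formula. -/
def FOForm.free {P Nom V : Type} : FOForm P Nom V → Set V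
  | .bot => ∅
  | .pred _ t => t.fvars
  | .rel t u => t.fvars ∪ u.fvars
  | .eq t u => t.fvars ∪ u.fvars
  | .neg φ => φ.free
  | .or φ ψ => φ.free ∪ ψ.free
  | .ex v φ => φ.free \ {v}

/-- The standard translation `stdTr b φ`; `b : Bool` chooses the current designated
variable (`false` for `x`, `true` for `y`). -/
def stdTr {P Nom : Type} : Bool → HForm P Nom → FOForm P Nom FVar
  | b, .bot => .bot
  | b, .prop p => .pred p (.var (Sum.inr b))
  | b, .nom s => .eq (.nom s) (.var (Sum.inr b))
  | b, .wvar z => .eq (.var (Sum.inl z)) (.var (Sum.inr b))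
  | b, .neg φ => .neg (stdTr b φ)
  | b, .or φ ψ => .or (stdTr b φ) (stdTr b ψ)
  | b, .dia φ => .ex (Sum.inr (!b))
      (FOForm.and (.rel (.var (Sum.inr b)) (.var (Sum.inr (!b)))) (stdTr (!b) φ))
  | b, .bind z φ => .ex (Sum.inl z)
      (FOForm.and (.eq (.var (Sum.inl z)) (.var (Sum.inr b))) (stdTr b φ))
  | b, .atv z φ => .ex (Sum.inr (!b))
      (FOForm.and (.eq (.var (Sum.inr (!b))) (.var (Sum.inl z))) (stdTr (!b) φ))
  | b, .atn s φ => .ex (Sum.inr (!b))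
      (FOForm.and (.eq (.var (Sum.inr (!b))) (.nom s)) (stdTr (!b) φ))
  | b, .exq z φ => .ex (Sum.inl z) (stdTr b φ)

/-- `M ⊨ φ[m]`: satisfaction of a first-order formula whose free variable is the
designated variable `x = Sum.inr false`, under the assignment sending `x` to `m`. -/
def FOSatAt {P Nom : Type} (M : Kripke P Nom) (m : M.W) (φ : FOForm P Nom FVar) : Prop :=
  ∀ g : FVar → M.W, g (Sum.inr false) = m → FOSat M g φ

/-! ## Bisimulations -/

/-- Ordinary bisimulations between Kripke structures. -/
def IsBisim {P Nom : Type} (M N : Kripke P Nom) (B : M.W → N.W → Prop) : Prop :=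
  ∀ m n, B m n →
    (∀ p, M.V p m ↔ N.V p n) ∧
    (∀ m', M.R m m' → ∃ n', N.R n n' ∧ B m' n') ∧
    (∀ n', N.R n n' → ∃ m', M.R m m' ∧ B m' n')

/-- Quasi-injectivity of a bisimulation. -/
def QuasiInjective {P Nom : Type} (M N : Kripke P Nom) (B : M.W → N.W → Prop) : Prop :=
  (∀ m n n', B m n → B m n' → n ≠ n' →
     ¬ Relation.ReflTransGen N.R n n' ∧ ¬ Relation.ReflTransGen N.R n' n) ∧
  (∀ m m' n, B m n → B m' n → m ≠ m' →
     ¬ Relation.ReflTransGen M.R m m' ∧ ¬ Relation.ReflTransGen M.R m' m)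

/-- The type of relations `B_k ⊆ (M^k × M) × (N^k × N)`. -/
abbrev KRel {P Nom : Type} (M N : Kripke P Nom) (k : ℕ) : Type :=
  (Fin k → M.W) → M.W → (Fin k → N.W) → N.W → Prop

section BisimConds

variable {P Nom : Type} (M N : Kripke P Nom) {k : ℕ}

/-- Condition (prop). -/
def PropCond (B : KRel M N k) : Prop :=
  ∀ mb m nb n, B mb m nb n → ∀ p, M.V p m ↔ N.V p n

/-- Condition (wvar). -/
def WvarCond (B : KRel M N k) : Prop :=
  ∀ mb m nb n, B mb m nb n → ∀ j : Fin k, mb j = m ↔ nb j = n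

/-- Condition (forth). -/
def ForthCond (B : KRel M N k) : Prop :=
  ∀ mb m nb n, B mb m nb n → ∀ m', M.R m m' → ∃ n', N.R n n' ∧ B mb m' nb n'

/-- Condition (back). -/
def BackCond (B : KRel M N k) : Prop :=
  ∀ mb m nb n, B mb m nb n → ∀ n', N.R n n' → ∃ m', M.R m m' ∧ B mb m' nb n'

/-- Condition (nom). -/
def NomCond (B : KRel M N k) : Prop :=
  ∀ mb m nb n, B mb m nb n → ∀ s : Nom, m = M.nom s ↔ n = N.nom s

/-- Condition (atv). -/
def AtvCond (B : KRel M N k) : Prop :=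
  ∀ mb m nb n, B mb m nb n → ∀ j : Fin k, B mb (mb j) nb (nb j)

/-- Condition (atn). -/
def AtnCond (B : KRel M N k) : Prop :=
  ∀ mb m nb n, B mb m nb n → ∀ s : Nom, B mb (M.nom s) nb (N.nom s)

/-- Condition (bind). -/
def BindCond (B : KRel M N k) : Prop :=
  ∀ mb m nb n, B mb m nb n → ∀ j : Fin k,
    B (Function.update mb j m) m (Function.update nb j n) n

/-- Condition (ex). -/
def ExCond (B : KRel M N k) : Prop :=
  ∀ mb m nb n, B mb m nb n → ∀ j : Fin k,
    (∀ u : M.W, ∃ u' : N.W, B (Function.update mb j u) m (Function.update nb j u') n) ∧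
    (∀ u' : N.W, ∃ u : M.W, B (Function.update mb j u) m (Function.update nb j u') n)

/-- A `k`-bisimulation: conditions (prop), (wvar), (forth), (back). -/
def IsKBisim (B : KRel M N k) : Prop :=
  PropCond M N B ∧ WvarCond M N B ∧ ForthCond M N B ∧ BackCond M N B

/-- The conditions `cond(F)` for a feature set `F`, for a single relation `B_k`. -/
def SatisfiesConds (F : Set Feature) (B : KRel M N k) : Prop :=
  (Feature.nom ∈ F → NomCond M N B) ∧
  (Feature.bind ∈ F → BindCond M N B) ∧
  (Feature.at_ ∈ F → AtvCond M N B) ∧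
  (Feature.exq ∈ F → ExCond M N B) ∧
  (Feature.at_ ∈ F → Feature.nom ∈ F → AtnCond M N B)

end BisimConds

/-- An `F`-ω-bisimulation: a non-empty family `(B_k)` of `k`-bisimulations satisfying
(ext) and all the conditions in `cond(F)`. -/
def IsFOmegaBisim {P Nom : Type} (F : Set Feature) (M N : Kripke P Nom)
    (B : (k : ℕ) → KRel M N k) : Prop :=
  (∀ k, IsKBisim M N (B k)) ∧
  (∃ k mb m nb n, B k mb m nb n) ∧
  (∀ k (mb : Fin k → M.W) m nb n, B k mb m nb n →
     B (k+1) (Fin.snoc mb m) m (Fin.snoc nb n) n) ∧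
  (∀ k, SatisfiesConds M N F (B (k : ℕ)))

/-! ## `(k,ℓ)`- and `(ω,ℓ)`-bisimulations -/

section KL

variable {P Nom : Type} (M N : Kripke P Nom)

/-- A basic `(k,ℓ)`-bisimulation from `M` to `N` (the relations `Z i` for `i ≤ ℓ`). -/
def IsBasicKLBisim (k ℓ : ℕ) (Z : ℕ → KRel M N k) : Prop :=
  (∀ i ≤ ℓ, PropCond M N (Z i) ∧ WvarCond M N (Z i)) ∧
  (∀ i, 0 < i → i ≤ ℓ → ∀ mb m nb n, Z (i-1) mb m nb n →
    (∀ u, M.R m u → ∃ u', N.R n u' ∧ Z i mb u nb u') ∧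
    (∀ u', N.R n u' → ∃ u, M.R m u ∧ Z i mb u nb u'))

/-- The conditions `cond(F)` for a `(k,ℓ)`-bisimulation: (nom), (atv), (atn) are
required within each `Z i` (`i ≤ ℓ`), whereas (bind) and (ex) pass from `Z (i-1)`
to `Z i` for `0 < i ≤ ℓ`. -/
def KLSatisfiesConds (F : Set Feature) (k ℓ : ℕ) (Z : ℕ → KRel M N k) : Prop :=
  (Feature.nom ∈ F → ∀ i ≤ ℓ, NomCond M N (Z i)) ∧
  (Feature.at_ ∈ F → ∀ i ≤ ℓ, AtvCond M N (Z i)) ∧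
  (Feature.at_ ∈ F → Feature.nom ∈ F → ∀ i ≤ ℓ, AtnCond M N (Z i)) ∧
  (Feature.bind ∈ F → ∀ i, 0 < i → i ≤ ℓ → ∀ mb m nb n, Z (i-1) mb m nb n →
     ∀ j : Fin k, Z i (Function.update mb j m) m (Function.update nb j n) n) ∧
  (Feature.exq ∈ F → ∀ i, 0 < i → i ≤ ℓ → ∀ mb m nb n, Z (i-1) mb m nb n →
     ∀ j : Fin k,
       (∀ u : M.W, ∃ u' : N.W, Z i (Function.update mb j u) m (Function.update nb j u') n) ∧
       (∀ u' : N.W, ∃ u : M.W, Z i (Function.update mb j u) m (Function.update nb j u') n))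

/-- An `F`-`(k,ℓ)`-bisimulation. -/
def IsFKLBisim (F : Set Feature) (k ℓ : ℕ) (Z : ℕ → KRel M N k) : Prop :=
  IsBasicKLBisim M N k ℓ Z ∧ KLSatisfiesConds M N F k ℓ Z

/-- An `F`-`(ω,ℓ)`-bisimulation: a system `(Z^k_i)_{i ≤ ℓ, k ∈ ω}` of
`F`-`(k,ℓ)`-bisimulations satisfying the extensibility condition (ext). -/
def IsFOmegaLBisim (F : Set Feature) (ℓ : ℕ)
    (Z : (k : ℕ) → ℕ → KRel M N k) : Prop :=
  (∀ k, IsFKLBisim M N F k ℓ (Z k)) ∧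
  (∀ k i, 0 < i → i ≤ ℓ → ∀ (mb : Fin k → M.W) m nb n, Z k (i-1) mb m nb n →
     Z (k+1) i (Fin.snoc mb m) m (Fin.snoc nb n) n)

end KL

/-!
The argument is by induction on formulas, with the invariant that the values of every free variable
under the two assignments are recorded at a common position of the two related tuples. At `↓x` and
`∃x` the tuples are lengthened by (ext), instead of being overwritten at a position reserved for
`x`, and for `∃x` the condition (ex) is then applied at the new position. An earlier value of `x`
stays in the tuples, where the invariant no longer refers to it.
-/

theorem HForm.inFragment.mono {P Nom : Type} {F G : Set Feature} (hFG : F ⊆ G)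
    {φ : HForm P Nom} (hφ : φ.inFragment F) : φ.inFragment G := by
  induction φ with
  | bot | prop | wvar => trivial
  | nom s => exact hFG hφ
  | neg φ ih | dia φ ih => exact ih hφ
  | or φ ψ ihφ ihψ => exact ⟨ihφ hφ.1, ihψ hφ.2⟩
  | bind x φ ih | atv x φ ih | exq x φ ih => exact ⟨hFG hφ.1, ih hφ.2⟩
  | atn s φ ih => exact ⟨hFG hφ.1, hFG hφ.2.1, ih hφ.2.2⟩

/-- The values of the assignments `ν` and `μ` at each variable in `X` occur at a common position of
the tuples `a` and `b`. The position is not a function of the variable, so variables may share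
positions and tuples may have entries that belong to no variable. -/
def RecordedOn {ι α β : Type*} {k : ℕ} (X : Set ι) (ν : ι → α) (μ : ι → β)
    (a : Fin k → α) (b : Fin k → β) : Prop :=
  ∀ x ∈ X, ∃ j, ν x = a j ∧ μ x = b j

namespace RecordedOn

variable {ι α β : Type*} {k : ℕ} {X Y : Set ι} {ν : ι → α} {μ : ι → β}
  {a : Fin k → α} {b : Fin k → β}

theorem mono (hXY : X ⊆ Y) (h : RecordedOn Y ν μ a b) : RecordedOn X ν μ a b :=
  fun x hx => h x (hXY hx)

theorem update_snoc [DecidableEq ι] {x : ι} (h : RecordedOn (X \ {x}) ν μ a b) (u : α) (v : β) :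
    RecordedOn X (Function.update ν x u) (Function.update μ x v)
      (Fin.snoc a u : Fin (k + 1) → α) (Fin.snoc b v : Fin (k + 1) → β) := by
  intro y hy
  obtain rfl | hyx := eq_or_ne y x
  · exact ⟨Fin.last k, by simp, by simp⟩
  · obtain ⟨j, hν, hμ⟩ := h y ⟨hy, hyx⟩
    exact ⟨j.castSucc, by simp [hyx, hν], by simp [hyx, hμ]⟩

end RecordedOn

namespace IsFOmegaBisim

variable {P Nom : Type} {F : Set Feature} {M N : Kripke P Nom} {B : (k : ℕ) → KRel M N k}

theorem propCond (hB : IsFOmegaBisim F M N B) (k : ℕ) : PropCond M N (B k) :=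
  (hB.1 k).1

theorem wvarCond (hB : IsFOmegaBisim F M N B) (k : ℕ) : WvarCond M N (B k) :=
  (hB.1 k).2.1

theorem forthCond (hB : IsFOmegaBisim F M N B) (k : ℕ) : ForthCond M N (B k) :=
  (hB.1 k).2.2.1

theorem backCond (hB : IsFOmegaBisim F M N B) (k : ℕ) : BackCond M N (B k) :=
  (hB.1 k).2.2.2

theorem nomCond (hB : IsFOmegaBisim F M N B) (hF : Feature.nom ∈ F) (k : ℕ) :
    NomCond M N (B k) :=
  (hB.2.2.2 k).1 hF

theorem atvCond (hB : IsFOmegaBisim F M N B) (hF : Feature.at_ ∈ F) (k : ℕ) :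
    AtvCond M N (B k) :=
  (hB.2.2.2 k).2.2.1 hF

theorem exCond (hB : IsFOmegaBisim F M N B) (hF : Feature.exq ∈ F) (k : ℕ) :
    ExCond M N (B k) :=
  (hB.2.2.2 k).2.2.2.1 hF

theorem atnCond (hB : IsFOmegaBisim F M N B) (hat : Feature.at_ ∈ F) (hnom : Feature.nom ∈ F)
    (k : ℕ) : AtnCond M N (B k) :=
  (hB.2.2.2 k).2.2.2.2 hat hnom

variable {k : ℕ} {mb : Fin k → M.W} {m : M.W} {nb : Fin k → N.W} {n : N.W}

theorem snoc_self (hB : IsFOmegaBisim F M N B) (h : B k mb m nb n) :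
    B (k + 1) (Fin.snoc mb m) m (Fin.snoc nb n) n :=
  hB.2.2.1 k mb m nb n h

theorem biTotal_snoc (hB : IsFOmegaBisim F M N B) (hF : Feature.exq ∈ F) (h : B k mb m nb n) :
    Relator.BiTotal fun (u : M.W) (v : N.W) => B (k + 1) (Fin.snoc mb u) m (Fin.snoc nb v) n := by
  simpa only [Relator.BiTotal, Relator.LeftTotal, Relator.RightTotal, Fin.update_snoc_last] using
    hB.exCond hF (k + 1) _ _ _ _ (hB.snoc_self h) (Fin.last k)

theorem hSat_iff (hB : IsFOmegaBisim F M N B) {φ : HForm P Nom}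
    (hφ : φ.inFragment (insert Feature.bind F)) (h : B k mb m nb n) {ν : ℕ → M.W} {μ : ℕ → N.W}
    (hfree : RecordedOn φ.free ν μ mb nb) : HSat M ν m φ ↔ HSat N μ n φ := by
  induction φ generalizing k mb m nb n ν μ with
  | bot => exact Iff.rfl
  | prop p => exact hB.propCond k _ _ _ _ h p
  | nom s => exact hB.nomCond (hφ.resolve_left nofun) k _ _ _ _ h s
  | wvar x =>
    obtain ⟨j, hν, hμ⟩ := hfree x rfl
    simpa only [HSat, hν, hμ, eq_comm] using hB.wvarCond k _ _ _ _ h j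
  | neg φ ih => exact not_congr (ih hφ h hfree)
  | or φ ψ ihφ ihψ =>
    exact or_congr (ihφ hφ.1 h (hfree.mono Set.subset_union_left))
      (ihψ hφ.2 h (hfree.mono Set.subset_union_right))
  | dia φ ih =>
    constructor
    · rintro ⟨m', hmm', hsat⟩
      obtain ⟨n', hnn', h'⟩ := hB.forthCond k _ _ _ _ h m' hmm'
      exact ⟨n', hnn', (ih hφ h' hfree).1 hsat⟩
    · rintro ⟨n', hnn', hsat⟩
      obtain ⟨m', hmm', h'⟩ := hB.backCond k _ _ _ _ h n' hnn'
      exact ⟨m', hmm', (ih hφ h' hfree).2 hsat⟩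
  | bind x φ ih => exact ih hφ.2 (hB.snoc_self h) (hfree.update_snoc m n)
  | atv x φ ih =>
    obtain ⟨j, hν, hμ⟩ := hfree x (Set.mem_insert x φ.free)
    have hjump : B k mb (ν x) nb (μ x) := by
      rw [hν, hμ]
      exact hB.atvCond (hφ.1.resolve_left nofun) k _ _ _ _ h j
    exact ih hφ.2 hjump (hfree.mono (Set.subset_insert x φ.free))
  | atn s φ ih =>
    have hjump : B k mb (M.nom s) nb (N.nom s) :=
      hB.atnCond (hφ.1.resolve_left nofun) (hφ.2.1.resolve_left nofun) k _ _ _ _ h s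
    exact ih hφ.2.2 hjump hfree
  | exq x φ ih =>
    exact (hB.biTotal_snoc (hφ.1.resolve_left nofun) h).rel_exists
      fun u v h' => ih hφ.2 h' (hfree.update_snoc u v)

end IsFOmegaBisim

theorem omega_bisim_implies_elem_equiv_general {P Nom : Type} {F : Set Feature}
    {M N : Kripke P Nom} {B : (k : ℕ) → KRel M N k} (hB : IsFOmegaBisim F M N B)
    {k : ℕ} {mb : Fin k → M.W} {m : M.W} {nb : Fin k → N.W} {n : N.W} (h : B k mb m nb n) :
    FElemEquiv (insert Feature.bind F) M m N n := by
  intro ψ hψ hfree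
  have hiff (ν : ℕ → M.W) (μ : ℕ → N.W) : HSat M ν m ψ ↔ HSat N μ n ψ :=
    hB.hSat_iff hψ h (by simp [RecordedOn, hfree])
  exact ⟨fun hM μ => (hiff (fun _ => m) μ).1 (hM _), fun hN ν => (hiff ν (fun _ => n)).2 (hN _)⟩

/-- If `(B_k)` is an `F`-ω-bisimulation between `M` and `N` relating
`(⟨⟩, m)` to `(⟨⟩, n)`, then `(M, m)` and `(N, n)` are `F`-elementarily equivalent. -/
theorem omega_bisim_implies_elem_equiv {P Nom : Type} [Finite P] [Finite Nom]
    (F : Set Feature) (M N : Kripke P Nom) (B : (k : ℕ) → KRel M N k)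
    (hB : IsFOmegaBisim F M N B)
    (m : M.W) (n : N.W) (h0 : B 0 Fin.elim0 m Fin.elim0 n) :
    ∀ ψ : HForm P Nom, ψ.inFragment F → ψ.free = ∅ → (HSatS M m ψ ↔ HSatS N n ψ) :=
  fun _ hψ => omega_bisim_implies_elem_equiv_general hB h0 _ (hψ.mono (Set.subset_insert _ F))
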